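/- For every integer A ≥ 4 and every t ∈ [π/A, 3π/(2A)], setting s = At/4 ∈ [π/4, 3π/8], one has |sin(At)/(A·sin(t))| ≤ |sin(4s)/(4·sin(s))|. -/

import Mathlib

open Real

/-! Since `sin (A * t) / (A * sin t) = sinc (A * t) / sinc t`, replacing `A` by a smaller `B` while
keeping `x = A * t` fixed only changes the denominator, from `sinc (x / A)` to `sinc (x / B)`. The
latter is smaller because `sinc` is decreasing on `[0, π]`, its values being the slopes of the
chords from the origin to the graph of `sin`, which is concave there. -/

theorem antitoneOn_sinc_Icc : AntitoneOn sinc (Set.Icc 0 π) := by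
  intro x hx y hy hxy
  obtain rfl | hx₀ := hx.1.eq_or_lt
  · rw [sinc_zero]
    exact sinc_le_one y
  · have hy₀ : 0 < y := hx₀.trans_le hxy
    rw [sinc_eq_dslope, dslope_of_ne _ hx₀.ne', dslope_of_ne _ hy₀.ne']
    exact strictConcaveOn_sin_Icc.concaveOn.antitoneOn_slope_gt (Set.left_mem_Icc.2 pi_nonneg)
      ⟨hx, hx₀⟩ ⟨hy, hy₀⟩ hxy

theorem sinc_pos_of_mem_Ioo {x : ℝ} (hx : x ∈ Set.Ioo 0 π) : 0 < sinc x := by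
  rw [sinc_of_ne_zero hx.1.ne']
  exact div_pos (sin_pos_of_mem_Ioo hx) hx.1

theorem sin_mul_div_mul_sin_eq_sinc_div_sinc {a t : ℝ} (ha : a ≠ 0) (ht : t ≠ 0) :
    sin (a * t) / (a * sin t) = sinc (a * t) / sinc t := by
  rw [sinc_of_ne_zero (mul_ne_zero ha ht), sinc_of_ne_zero ht]
  field_simp

theorem Icc_pi_div_subset_Ioo_four_mul_pi_div {A : ℝ} (hA : 0 < A) :
    Set.Icc (π / A) (3 * π / (2 * A)) ⊆ Set.Ioo 0 (4 * π / A) := by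
  refine Set.Icc_subset_Ioo (div_pos pi_pos hA) ?_
  rw [mul_div_mul_comm, mul_div_assoc]
  gcongr
  norm_num

theorem GA_rescale_bound_general {A B t : ℝ} (hB : 0 < B) (hBA : B ≤ A)
    (ht : t ∈ Set.Ioo 0 (B * π / A)) :
    |sin (A * t) / (A * sin t)| ≤ |sin (B * (A * t / B)) / (B * sin (A * t / B))| := by
  obtain ⟨ht₀, htπ⟩ := ht
  have hA : 0 < A := hB.trans_le hBA
  have hs : A * t / B ∈ Set.Ioo 0 π := by
    rw [lt_div_iff₀' hA] at htπ
    exact ⟨by positivity, (div_lt_iff₀' hB).2 htπ⟩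
  have hts : t ≤ A * t / B := by
    rw [le_div_iff₀' hB]
    gcongr
  have sinc_s_pos : 0 < sinc (A * t / B) := sinc_pos_of_mem_Ioo hs
  have sinc_s_le : sinc (A * t / B) ≤ sinc t :=
    antitoneOn_sinc_Icc ⟨ht₀.le, hts.trans hs.2.le⟩ (Set.Ioo_subset_Icc_self hs) hts
  rw [sin_mul_div_mul_sin_eq_sinc_div_sinc hA.ne' ht₀.ne',
    sin_mul_div_mul_sin_eq_sinc_div_sinc hB.ne' hs.1.ne', mul_div_cancel₀ _ hB.ne',
    abs_div, abs_div, abs_of_pos sinc_s_pos, abs_of_pos (sinc_s_pos.trans_le sinc_s_le)]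
  gcongr

theorem GA_rescale_bound (A : ℤ) (hA : 4 ≤ A) (t : ℝ)
    (ht : t ∈ Set.Icc (π / A) (3 * π / (2 * A))) :
    |Real.sin (A * t) / (A * Real.sin t)| ≤
      |Real.sin (4 * (A * t / 4)) / (4 * Real.sin (A * t / 4))| :=
  have hA' : (4 : ℝ) ≤ A := mod_cast hA
  GA_rescale_bound_general four_pos hA'
    (Icc_pi_div_subset_Ioo_four_mul_pi_div (four_pos.trans_le hA') ht)
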